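/- arXiv:1701.02597 — 2 statements merged into one kernel-verified Lean document; each statement's English description precedes it below -/
import Mathlib

section
/- Fourier transform of the Cauchy kernel: for every z ∈ ℂ with Im(z) ≠ 0, the Fourier transform (in the L^2 sense, with convention φ̂(k) = ∫ e^{ikx} φ(x) dx) of the function φ_z(x) = 1/(z−x) is the function t ↦ −sgn(Im z)·2πi·1_{Im(z)·t > 0}·e^{itz}; consequently φ_z belongs to the Sobolev space H_s for every s ∈ ℝ. -/
/- Formalization of results from "Empirical spectral distributions of a Hermitian matrix
perturbed by a small random matrix" (arXiv:1701.02597). -/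

open MeasureTheory Filter Set Complex
open scoped Topology ENNReal NNReal

noncomputable section

/-- The claimed Fourier transform of the Cauchy kernel `φ_z(x) = 1/(z-x)`:
`t ↦ -sgn(Im z)·2πi·𝟙_{Im(z)·t>0}·e^{itz}`. -/
def cauchyFT (z : ℂ) (t : ℝ) : ℂ :=
  -((Real.sign z.im : ℝ) : ℂ) * (2 * (Real.pi : ℂ) * Complex.I) *
    (if 0 < z.im * t then 1 else 0) * Complex.exp (Complex.I * t * z)

open FourierTransform SchwartzMap in
theorem aux_fourier_ae {f : ℝ → ℂ} (h1 : Integrable f) (h2 : MemLp f 2) :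
    (𝓕 (h2.toLp f) : Lp (α := ℝ) ℂ 2 volume) =ᵐ[volume] 𝓕 f := by
  have hc : Continuous (𝓕 f) :=
    VectorFourier.fourierIntegral_continuous Real.continuous_fourierChar continuous_inner h1
  refine ae_eq_of_integral_contDiff_smul_eq
    ((Lp.memLp (𝓕 (h2.toLp f))).locallyIntegrable (by norm_num)) hc.locallyIntegrable ?_
  intro g hg hgs
  have hgs' : HasCompactSupport (fun x => (g x : ℂ)) := hgs.comp_left (g := fun x : ℝ => (x : ℂ)) (by simp)
  have hg' : ContDiff ℝ (⊤ : ℕ∞) (fun x => (g x : ℂ)) := Complex.ofRealCLM.contDiff.comp hg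
  set G : 𝓢(ℝ, ℂ) := hgs'.toSchwartzMap hg' with hG
  have hGe : ∀ x, G x = (g x : ℂ) := fun x => rfl
  have e := congrArg (fun T => T G) (Lp.fourier_toTemperedDistribution_eq (h2.toLp f))
  simp only [TemperedDistribution.fourier_apply, Lp.toTemperedDistribution_apply] at e
  have e1 : ∫ x, (𝓕 G) x • (h2.toLp f) x = ∫ x, (𝓕 G) x • f x := by
    apply integral_congr_ae
    filter_upwards [h2.coeFn_toLp] with x hx
    rw [hx]
  have e2 : ∫ x, (𝓕 G) x • f x = ∫ x, G x • 𝓕 f x := by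
    simpa [SchwartzMap.fourier_coe] using! (VectorFourier.integral_fourierIntegral_smul_eq_flip (L := innerₗ ℝ)
      Real.continuous_fourierChar continuous_inner (G.integrable (μ := volume)) h1)
  have e3 := e.symm.trans (e1.trans e2)
  simpa [hGe] using e3

open FourierTransform SchwartzMap in
theorem aux_fourierInv_ae {f : ℝ → ℂ} (h1 : Integrable f) (h2 : MemLp f 2) :
    (𝓕⁻ (h2.toLp f) : Lp (α := ℝ) ℂ 2 volume) =ᵐ[volume] 𝓕⁻ f := by
  have hc : Continuous (𝓕⁻ f) := by
    have : Continuous (𝓕 f) :=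
      VectorFourier.fourierIntegral_continuous Real.continuous_fourierChar continuous_inner h1
    have h : 𝓕⁻ f = fun x => 𝓕 f (-x) := by
      ext x; exact Real.fourierInv_eq_fourier_neg f x
    rw [h]; exact this.comp continuous_neg
  refine ae_eq_of_integral_contDiff_smul_eq
    ((Lp.memLp (𝓕⁻ (h2.toLp f))).locallyIntegrable (by norm_num)) hc.locallyIntegrable ?_
  intro g hg hgs
  have hgs' : HasCompactSupport (fun x => (g x : ℂ)) := hgs.comp_left (g := fun x : ℝ => (x : ℂ)) (by simp)
  have hg' : ContDiff ℝ (⊤ : ℕ∞) (fun x => (g x : ℂ)) := Complex.ofRealCLM.contDiff.comp hg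
  set G : 𝓢(ℝ, ℂ) := hgs'.toSchwartzMap hg' with hG
  have hGe : ∀ x, G x = (g x : ℂ) := fun x => rfl
  have e := congrArg (fun T => T G) (Lp.fourierInv_toTemperedDistribution_eq (h2.toLp f))
  simp only [TemperedDistribution.fourierInv_apply, Lp.toTemperedDistribution_apply] at e
  have e1 : ∫ x, (𝓕⁻ G) x • (h2.toLp f) x = ∫ x, (𝓕⁻ G) x • f x := by
    apply integral_congr_ae
    filter_upwards [h2.coeFn_toLp] with x hx
    rw [hx]
  have e2 : ∫ x, (𝓕⁻ G) x • f x = ∫ x, G x • 𝓕⁻ f x := by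
    have := (VectorFourier.integral_fourierIntegral_smul_eq_flip (L := innerₗ ℝ)
      Real.continuous_fourierChar continuous_inner (G.integrable (μ := volume)) h1.comp_neg)
    calc ∫ x, (𝓕⁻ G) x • f x = ∫ x, (𝓕⁻ G) (-x) • f (-x) :=
          (integral_neg_eq_self (fun x => (𝓕⁻ G) x • f x) volume).symm
      _ = ∫ x, 𝓕 (G : ℝ → ℂ) x • f (-x) := by
          congr 1; ext x
          rw [SchwartzMap.fourierInv_coe, Real.fourierInv_eq_fourier_neg, neg_neg]
      _ = ∫ x, G x • 𝓕 (fun x => f (-x)) x := by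
          simpa using! this
      _ = _ := by rw [← Real.fourierInv_eq_fourier_comp_neg]
  have e3 := e.symm.trans (e1.trans e2)
  simpa [hGe] using e3

open FourierTransform in
theorem aux_inversion {f : ℝ → ℂ} (h1 : Integrable f) (h2 : MemLp f 2) :
    Tendsto (fun R : ℝ => eLpNorm (fun k : ℝ => 𝓕⁻ ((Icc (-R) R).indicator (𝓕 f)) k - f k) 2 volume)
      atTop (𝓝 0) := by
  have hc : Continuous (𝓕 f) :=
    VectorFourier.fourierIntegral_continuous Real.continuous_fourierChar continuous_inner h1
  have hF := aux_fourier_ae h1 h2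
  have hm : MemLp (𝓕 f) 2 := (memLp_congr_ae hF).1 (Lp.memLp _)
  have hF' : (𝓕 (h2.toLp f) : Lp (α := ℝ) ℂ 2 volume) = hm.toLp (𝓕 f) := by
    apply Lp.ext
    exact hF.trans hm.coeFn_toLp.symm
  have key : ∀ R : ℝ, eLpNorm (fun k : ℝ => 𝓕⁻ ((Icc (-R) R).indicator (𝓕 f)) k - f k) 2 volume
      = eLpNorm ((Icc (-R) R).indicator (𝓕 f) - 𝓕 f) 2 volume := by
    intro R
    have i1 : Integrable ((Icc (-R) R).indicator (𝓕 f)) := by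
      rw [integrable_indicator_iff measurableSet_Icc]
      exact hc.continuousOn.integrableOn_Icc
    have i2 : MemLp ((Icc (-R) R).indicator (𝓕 f)) 2 := hm.indicator measurableSet_Icc
    have a := aux_fourierInv_ae i1 i2
    have b : (fun k : ℝ => 𝓕⁻ ((Icc (-R) R).indicator (𝓕 f)) k - f k) =ᵐ[volume]
        ((𝓕⁻ (i2.toLp _) : Lp (α := ℝ) ℂ 2 volume) - h2.toLp f : Lp (α := ℝ) ℂ 2 volume) := by
      filter_upwards [a, h2.coeFn_toLp, Lp.coeFn_sub (𝓕⁻ (i2.toLp _) : Lp (α := ℝ) ℂ 2 volume) (h2.toLp f)]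
        with x hx hy hw
      rw [hw, Pi.sub_apply, hx, hy]
    rw [eLpNorm_congr_ae b, ← Lp.enorm_def]
    have c : ((𝓕⁻ (i2.toLp _) : Lp (α := ℝ) ℂ 2 volume) - h2.toLp f : Lp (α := ℝ) ℂ 2 volume)
        = (Lp.fourierTransformₗᵢ ℝ ℂ).symm (i2.toLp _ - hm.toLp _) := by
      rw [map_sub, ← hF']
      congr 1
      exact ((Lp.fourierTransformₗᵢ ℝ ℂ).symm_apply_apply _).symm
    rw [c, LinearIsometryEquiv.enorm_map, ← MemLp.toLp_sub, Lp.enorm_toLp]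
  simp_rw [key]
  have hsq : ∀ R : ℝ, eLpNorm ((Icc (-R) R).indicator (𝓕 f) - 𝓕 f) 2 volume =
      (∫⁻ x, ‖((Icc (-R) R).indicator (𝓕 f) - 𝓕 f) x‖ₑ ^ (2:ℝ)) ^ (1/2 : ℝ) := by
    intro R
    rw [eLpNorm_eq_lintegral_rpow_enorm_toReal (by norm_num) (by norm_num)]
    norm_num
  simp_rw [hsq]
  have hfin : ∫⁻ x, ‖𝓕 f x‖ₑ ^ (2:ℝ) ≠ ∞ := by
    have := lintegral_rpow_enorm_lt_top_of_eLpNorm_lt_top (p := 2) (by norm_num) (by norm_num) hm.2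
    simpa using this.ne
  have lim : Tendsto (fun R : ℝ => ∫⁻ x, ‖((Icc (-R) R).indicator (𝓕 f) - 𝓕 f) x‖ₑ ^ (2:ℝ))
      atTop (𝓝 (∫⁻ _ : ℝ, 0)) := by
    refine tendsto_lintegral_filter_of_dominated_convergence (fun x => ‖𝓕 f x‖ₑ ^ (2:ℝ)) ?_ ?_ hfin ?_
    · refine Eventually.of_forall fun R => ?_
      exact (((hc.measurable.indicator measurableSet_Icc).sub hc.measurable).enorm).pow_const _
    · refine Eventually.of_forall fun R => Eventually.of_forall fun x => ?_
      by_cases hx : x ∈ Icc (-R) R <;> simp [hx]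
    · refine Eventually.of_forall fun x => ?_
      apply tendsto_const_nhds.congr'
      filter_upwards [eventually_ge_atTop |x|] with R hR
      have hx : x ∈ Icc (-R) R := abs_le.1 hR
      simp [hx]
  have := (ENNReal.continuous_rpow_const (y := (1/2 : ℝ))).tendsto _ |>.comp lim
  simpa [Function.comp_def] using this

theorem aux_int (s : ℝ) {b : ℝ} (hb : 0 < b) :
    Integrable (fun k : ℝ => (1 + 2 * |k|) ^ s * Real.exp (-(b * |k|))) := by
  have hcont : Continuous (fun k : ℝ => (1 + 2 * |k|) ^ s * Real.exp (-(b * |k|))) := by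
    refine Continuous.mul ?_ (by fun_prop)
    refine Continuous.rpow_const (by fun_prop) fun x => Or.inl ?_
    positivity
  have hI : IntegrableOn (fun k : ℝ => (1 + 2 * |k|) ^ s * Real.exp (-(b * |k|))) (Ioi 0) := by
    refine integrable_of_isBigO_exp_neg (b := b / 2) (by positivity) hcont.continuousOn ?_
    have t : Tendsto (fun k : ℝ => 1 + 2 * k) atTop atTop :=
      tendsto_atTop_add_const_left _ _ (tendsto_id.const_mul_atTop (by norm_num))
    have o := ((isLittleO_rpow_exp_pos_mul_atTop s (b := b / 4) (by positivity)).comp_tendsto t).isBigO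
    have o2 := o.mul (Asymptotics.isBigO_refl (fun k : ℝ => Real.exp (-(b * k))) atTop)
    have o3 : (fun k : ℝ => (1 + 2 * |k|) ^ s * Real.exp (-(b * |k|))) =ᶠ[atTop]
        fun k : ℝ => ((fun x : ℝ => x ^ s) ∘ fun k : ℝ => 1 + 2 * k) k * Real.exp (-(b * k)) := by
      filter_upwards [eventually_ge_atTop 0] with k hk
      simp [abs_of_nonneg hk]
    refine o3.trans_isBigO (o2.trans ?_)
    refine Asymptotics.IsBigO.of_bound (Real.exp (b / 4)) (Eventually.of_forall fun k => ?_)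
    simp only [Function.comp, norm_mul, Real.norm_eq_abs, Real.abs_exp, ← Real.exp_add]
    apply le_of_eq; congr 1; ring
  rw [← integrableOn_univ, ← Iic_union_Ioi (a := (0:ℝ)), integrableOn_union]
  refine ⟨?_, hI⟩
  have := hI.comp_neg
  rw [integrableOn_Iic_iff_integrableOn_Iio]
  simpa using this

theorem aux_bound (z : ℂ) (hz : z.im ≠ 0) (k : ℝ) :
    ‖cauchyFT z k‖ ≤ 2 * Real.pi * Real.exp (-(|z.im| * |k|)) := by
  unfold cauchyFT
  have hs : |Real.sign z.im| = 1 := by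
    rcases Real.sign_apply_eq_of_ne_zero _ hz with h | h <;> simp [h]
  split_ifs with h
  · rw [← abs_mul, abs_of_pos h]
    simp [Complex.norm_exp, hs, abs_of_pos Real.pi_pos, mul_comm]
  · simp; positivity

theorem aux_meas (z : ℂ) : Measurable (cauchyFT z) := by
  unfold cauchyFT
  refine Measurable.mul (Measurable.mul measurable_const (Measurable.ite ?_ measurable_const measurable_const)) ?_
  · exact measurableSet_lt measurable_const (by fun_prop)
  · fun_prop

theorem aux_sq (z : ℂ) (hz : z.im ≠ 0) (s : ℝ) :
    Integrable (fun k : ℝ => (1 + 2 * |k|) ^ (2 * s) * ‖cauchyFT z k‖ ^ 2) := by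
  have hb : 0 < 2 * |z.im| := by positivity
  refine ((aux_int (2 * s) hb).const_mul ((2 * Real.pi) ^ 2)).mono' ?_ ?_
  · refine Measurable.aestronglyMeasurable (Measurable.mul (by fun_prop) ?_)
    exact (aux_meas z).norm.pow_const 2
  · refine Eventually.of_forall fun k => ?_
    rw [Real.norm_of_nonneg (by positivity)]
    have h1 := pow_le_pow_left₀ (norm_nonneg _) (aux_bound z hz k) 2
    have h2 : (2 * Real.pi * Real.exp (-(|z.im| * |k|))) ^ 2
        = (2 * Real.pi) ^ 2 * Real.exp (-(2 * |z.im| * |k|)) := by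
      rw [mul_pow, ← Real.exp_nat_mul]; congr 2; push_cast; ring
    rw [h2] at h1
    calc _ ≤ (1 + 2 * |k|) ^ (2 * s) * ((2 * Real.pi) ^ 2 * Real.exp (-(2 * |z.im| * |k|))) := by
          gcongr
      _ = _ := by ring

theorem aux_L1 (z : ℂ) (hz : z.im ≠ 0) : Integrable (cauchyFT z) := by
  have hb : 0 < |z.im| := by positivity
  refine ((aux_int 0 hb).const_mul (2 * Real.pi)).mono' (aux_meas z).aestronglyMeasurable ?_
  refine Eventually.of_forall fun k => ?_
  simpa using aux_bound z hz k

theorem aux_L2 (z : ℂ) (hz : z.im ≠ 0) : MemLp (cauchyFT z) 2 := by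
  rw [memLp_two_iff_integrable_sq_norm (aux_meas z).aestronglyMeasurable]
  simpa using aux_sq z hz 0

open FourierTransform in
theorem aux_FT (z : ℂ) (hz : z.im ≠ 0) (w : ℝ) :
    𝓕 (cauchyFT z) w = 2 * Real.pi * (1 / (z - ((2 * Real.pi * w : ℝ) : ℂ))) := by
  rw [Real.fourier_real_eq_integral_exp_smul]
  set a : ℂ := Complex.I * (z - ((2 * Real.pi * w : ℝ) : ℂ)) with ha
  have hare : a.re = - z.im := by simp [ha]
  have hne : z - ((2 * Real.pi * w : ℝ) : ℂ) ≠ 0 := by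
    intro h; apply hz; simpa using congrArg Complex.im h
  have hexp : ∀ v : ℝ, Complex.exp (↑(-2 * Real.pi * v * w) * Complex.I) * Complex.exp (Complex.I * v * z)
      = Complex.exp (a * v) := by
    intro v; rw [← Complex.exp_add, ha]; congr 1; push_cast; ring
  rcases lt_or_gt_of_ne hz with h | h
  · have e : ∀ v : ℝ, Complex.exp (↑(-2 * Real.pi * v * w) * Complex.I) • cauchyFT z v
        = (Iio (0:ℝ)).indicator (fun v : ℝ => (2 * (Real.pi : ℂ) * Complex.I) * Complex.exp (a * v)) v := by
      intro v
      simp only [← hexp]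
      by_cases hv : v < 0
      · have : 0 < z.im * v := mul_pos_of_neg_of_neg h hv
        simp [cauchyFT, Real.sign_of_neg h, hv, this]; ring
      · have : ¬ 0 < z.im * v := by push Not at hv ⊢; exact mul_nonpos_of_nonpos_of_nonneg h.le hv
        simp [cauchyFT, hv, this]
    simp_rw [e]
    rw [integral_indicator measurableSet_Iio, ← integral_Iic_eq_integral_Iio, integral_const_mul,
      integral_exp_mul_complex_Iic (by rw [hare]; linarith)]
    rw [ha]; field_simp; simp
  · have e : ∀ v : ℝ, Complex.exp (↑(-2 * Real.pi * v * w) * Complex.I) • cauchyFT z v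
        = (Ioi (0:ℝ)).indicator (fun v : ℝ => -(2 * (Real.pi : ℂ) * Complex.I) * Complex.exp (a * v)) v := by
      intro v
      simp only [← hexp]
      by_cases hv : 0 < v
      · have : 0 < z.im * v := mul_pos h hv
        simp [cauchyFT, Real.sign_of_pos h, hv, h]; ring
      · have : ¬ 0 < z.im * v := by push Not at hv ⊢; exact mul_nonpos_of_nonneg_of_nonpos h.le hv
        simp [cauchyFT, hv, this]
    simp_rw [e]
    rw [integral_indicator measurableSet_Ioi, integral_const_mul,
      integral_exp_mul_complex_Ioi (by rw [hare]; linarith)]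
    rw [ha]; field_simp; simp

open FourierTransform in
theorem aux_trunc (z : ℂ) (hz : z.im ≠ 0) (R k : ℝ) :
    (∫ u in Icc (-R) R, Complex.exp (Complex.I * k * u) * (1 / (z - (u : ℂ)))) =
    𝓕⁻ ((Icc (-(R / (2 * Real.pi))) (R / (2 * Real.pi))).indicator (𝓕 (cauchyFT z))) k := by
  have hpi : 0 < 2 * Real.pi := by positivity
  rw [Real.fourierInv_eq', ← integral_indicator measurableSet_Icc]
  set F : ℝ → ℂ := (Icc (-R) R).indicator
    (fun u : ℝ => Complex.exp (Complex.I * k * u) * (1 / (z - (u : ℂ)))) with hF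
  have h := Measure.integral_comp_mul_left F (2 * Real.pi)
  have h' : ∫ u, F u = (2 * Real.pi) • ∫ x, F (2 * Real.pi * x) := by
    rw [h, abs_of_pos (inv_pos.2 hpi), smul_inv_smul₀ hpi.ne']
  rw [h', ← integral_smul]
  congr 1; ext x
  have hmem : x ∈ Icc (-(R / (2 * Real.pi))) (R / (2 * Real.pi)) ↔ 2 * Real.pi * x ∈ Icc (-R) R := by
    rw [mem_Icc, mem_Icc, ← neg_div, div_le_iff₀ hpi, le_div_iff₀ hpi, mul_comm x]
  by_cases hx : 2 * Real.pi * x ∈ Icc (-R) R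
  · rw [hF, indicator_of_mem hx, indicator_of_mem (hmem.2 hx), aux_FT z hz]
    have : Complex.exp (Complex.I * k * ((2 * Real.pi * x : ℝ) : ℂ))
        = Complex.exp (((2 * Real.pi * inner ℝ x k : ℝ) : ℂ) * Complex.I) := by
      congr 1; simp; ring
    rw [this, Complex.real_smul, smul_eq_mul]; push_cast; ring
  · rw [hF, indicator_of_notMem hx, indicator_of_notMem (fun h => hx (hmem.1 h))]
    simp

/-- **Fourier transform of the Cauchy kernel** (Lemma 9.4): for every non-real `z`, the
Fourier transform, in the L² sense and with the convention `φ̂(k) = ∫ e^{ikx} φ(x) dx`,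
of `φ_z(x) = 1/(z-x)` is `t ↦ -sgn(Im z)·2πi·𝟙_{Im(z)·t>0}·e^{itz}`: the truncated
Fourier integrals converge in L² to this function. Consequently, `φ_z` belongs to the
Sobolev space `H_s` for every real `s`, i.e. its Fourier transform has finite weighted
L² norm `∫ (1+2|k|)^{2s} |φ̂_z(k)|² dk < ∞`. -/
theorem fourier_transform_cauchy_kernel (z : ℂ) (hz : z.im ≠ 0) :
    Tendsto
      (fun R : ℝ => eLpNorm
        (fun k : ℝ =>
          (∫ u in Icc (-R) R, Complex.exp (Complex.I * k * u) * (1 / (z - (u : ℂ)))) -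
            cauchyFT z k) 2 volume)
      atTop (𝓝 0) ∧
    ∀ s : ℝ, Integrable (fun k : ℝ => (1 + 2 * |k|) ^ (2 * s) * ‖cauchyFT z k‖ ^ 2) := by
  refine ⟨?_, aux_sq z hz⟩
  have hpi : 0 < 2 * Real.pi := by positivity
  have t : Tendsto (fun R : ℝ => R / (2 * Real.pi)) atTop atTop :=
    tendsto_id.atTop_div_const hpi
  have := (aux_inversion (aux_L1 z hz) (aux_L2 z hz)).comp t
  refine this.congr fun R => ?_
  simp only [Function.comp, aux_trunc z hz]

end
end

section
/- Density of Cauchy kernels in Sobolev spaces: for every s ∈ ℝ, the linear span L_1 of the family of functions φ_z(x) := 1/(z−x), z ∈ ℂ∖ℝ, is dense in the Sobolev space (H_s, ‖·‖_{H_s}). -/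
/- Formalization of results from "Empirical spectral distributions of a Hermitian matrix
perturbed by a small random matrix" (arXiv:1701.02597). -/

open MeasureTheory Filter Set Complex
open scoped Topology ENNReal NNReal

noncomputable section

open scoped ContDiff FourierTransform in
lemma ae_zero_of_fourier (h : ℝ → ℂ) (hi : Integrable h) (h0 : ∀ x, 𝓕 h x = 0) : ∀ᵐ t, h t = 0 := by
  apply ae_eq_zero_of_integral_contDiff_smul_eq_zero hi.locallyIntegrable
  intro g hg hc
  have hc' : HasCompactSupport (fun x => (g x : ℂ)) := hc.comp_left (g := fun x : ℝ => (x : ℂ)) (by simp)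
  let G : SchwartzMap ℝ ℂ := hc'.toSchwartzMap (Complex.ofRealCLM.contDiff.comp hg)
  have hG : ∀ x, G x = (g x : ℂ) := fun x => rfl
  have h2 := VectorFourier.integral_fourierIntegral_smul_eq_flip (L := innerₗ ℝ) (μ := volume) (ν := volume) (f := (𝓕⁻ G : SchwartzMap ℝ ℂ)) (g := h) Real.continuous_fourierChar
     continuous_inner (𝓕⁻ G : SchwartzMap ℝ ℂ).integrable hi
  have e1 : VectorFourier.fourierIntegral Real.fourierChar volume (innerₗ ℝ) (𝓕⁻ G : SchwartzMap ℝ ℂ) = fun x => (g x : ℂ) := by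
    change 𝓕 ((𝓕⁻ G : SchwartzMap ℝ ℂ) : ℝ → ℂ) = _
    rw [← SchwartzMap.fourier_coe]
    simp [hG, funext_iff]
  have e2 : VectorFourier.fourierIntegral Real.fourierChar volume (innerₗ ℝ).flip h = fun x => 0 := by
    rw [flip_innerₗ]
    exact funext h0
  rw [e1, e2] at h2
  simpa using h2

lemma int_exp_abs : Integrable (fun t : ℝ => Real.exp (-|t|)) := by
  rw [← integrableOn_univ, ← Iic_union_Ioi (a := (0:ℝ)), integrableOn_union]
  constructor
  · refine (integrableOn_exp_Iic 0).congr_fun (fun t ht => ?_) measurableSet_Iic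
    simp only [mem_Iic] at ht
    simp [abs_of_nonpos ht]
  · refine (integrableOn_exp_neg_Ioi 0).congr_fun (fun t ht => ?_) measurableSet_Ioi
    simp only [mem_Ioi] at ht
    simp [abs_of_pos ht]

lemma weight_bound (p : ℝ) : ∃ C : ℝ, ∀ t : ℝ, (1 + 2 * |t|) ^ p ≤ C * Real.exp |t| := by
  obtain ⟨n, hn⟩ := exists_nat_ge p
  refine ⟨2 ^ n * n.factorial * Real.exp (1/2), fun t => ?_⟩
  have ht := abs_nonneg t
  have h1 : (1 + 2 * |t|) ^ p ≤ (1 + 2 * |t|) ^ (n:ℝ) :=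
    Real.rpow_le_rpow_of_exponent_le (by linarith) hn
  rw [Real.rpow_natCast] at h1
  have h2 := Real.pow_div_factorial_le_exp (1/2 + |t|) (by positivity) n
  rw [div_le_iff₀ (by positivity), Real.exp_add] at h2
  calc _ ≤ (1 + 2 * |t|) ^ n := h1
    _ = 2 ^ n * (1/2 + |t|) ^ n := by rw [← mul_pow]; ring
    _ ≤ 2 ^ n * (Real.exp (1/2) * Real.exp |t| * n.factorial) := by gcongr
    _ = _ := by ring

/-- The weighted Fourier-side Cauchy kernel. -/
def wCauchy (s : ℝ) (z : ℂ) (t : ℝ) : ℂ := (((1 + 2 * |t|) ^ s : ℝ) : ℂ) * cauchyFT z t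

lemma measurable_wCauchy (s : ℝ) (z : ℂ) : Measurable (wCauchy s z) := by
  unfold wCauchy cauchyFT
  have hm : Measurable (fun t : ℝ => if 0 < z.im * t then (1 : ℂ) else 0) :=
    Measurable.ite (measurableSet_lt measurable_const (by fun_prop)) measurable_const
      measurable_const
  fun_prop

lemma norm_sq_weight (s t : ℝ) (c : ℂ) :
    ‖(((1 + 2 * |t|) ^ s : ℝ) : ℂ) * c‖ ^ 2 = (1 + 2 * |t|) ^ (2 * s) * ‖c‖ ^ 2 := by
  have ht : 0 ≤ 1 + 2 * |t| := by positivity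
  rw [norm_mul, mul_pow, Complex.norm_real, Real.norm_eq_abs, sq_abs, mul_comm 2 s,
    Real.rpow_mul ht]
  norm_num

lemma norm_cauchyFT_le (z : ℂ) (hz : |z.im| = 1) (t : ℝ) :
    ‖cauchyFT z t‖ ≤ 2 * Real.pi * Real.exp (-|t|) := by
  unfold cauchyFT
  have hpi := Real.pi_pos
  split_ifs with h
  · have h1 : z.im * t = |t| := by
      rw [← abs_of_pos h, abs_mul, hz, one_mul]
    have h2 : |Real.sign z.im| ≤ 1 := by
      rcases Real.sign_apply_eq z.im with h | h | h <;> simp [h]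
    have h3 : (I * t * z).re = -|t| := by
      rw [← h1]; simp; ring
    simp only [norm_mul, norm_neg, Complex.norm_real, Complex.norm_exp, h3, norm_I,
      Complex.norm_ofNat, mul_one, norm_one, Real.norm_eq_abs, abs_of_pos hpi]
    have : 0 ≤ 2 * Real.pi * Real.exp (-|t|) := by positivity
    nlinarith
  · simp; positivity

lemma memLp_wCauchy (s : ℝ) (z : ℂ) (hz : |z.im| = 1) : MemLp (wCauchy s z) 2 := by
  have hm := (measurable_wCauchy s z)
  rw [memLp_two_iff_integrable_sq_norm hm.aestronglyMeasurable]
  obtain ⟨C, hC⟩ := weight_bound (2 * s)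
  refine Integrable.mono' (int_exp_abs.const_mul ((2 * Real.pi) ^ 2 * C)) (by fun_prop) ?_
  filter_upwards with t
  rw [Real.norm_eq_abs, abs_of_nonneg (by positivity), wCauchy, norm_sq_weight]
  have h1 := norm_cauchyFT_le z hz t
  calc _ ≤ (C * Real.exp |t|) * (2 * Real.pi * Real.exp (-|t|)) ^ 2 := by
        have := hC t
        gcongr
        exact le_trans (by positivity) this
    _ = (2 * Real.pi) ^ 2 * C * Real.exp (-|t|) * (Real.exp |t| * Real.exp (-|t|)) := by ring
    _ = _ := by rw [← Real.exp_add]; simp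

lemma wCauchy_shift (s x : ℝ) (z : ℂ) (t : ℝ) :
    wCauchy s (x + z) t = Complex.exp (I * t * x) * wCauchy s z t := by
  simp only [wCauchy, cauchyFT, add_im, ofReal_im, zero_add, mul_add, Complex.exp_add]
  ring

lemma wCauchy_ne_zero (s : ℝ) (z : ℂ) (t : ℝ) (h : 0 < z.im * t) : wCauchy s z t ≠ 0 := by
  have hz : z.im ≠ 0 := by rintro h0; simp [h0] at h
  have h1 : Real.sign z.im ≠ 0 := by rwa [Ne, Real.sign_eq_zero_iff]
  have h2 : (0 : ℝ) < (1 + 2 * |t|) ^ s := by positivity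
  have h3 : ((((1 + 2 * |t|) ^ s : ℝ)) : ℂ) ≠ 0 := by exact_mod_cast h2.ne'
  simp only [wCauchy, cauchyFT, if_pos h]
  have h4 : (Real.pi : ℂ) ≠ 0 := by exact_mod_cast Real.pi_ne_zero
  have h5 : ((Real.sign z.im : ℝ) : ℂ) ≠ 0 := by exact_mod_cast h1
  simp only [ne_eq, mul_eq_zero, not_or, neg_eq_zero]
  exact ⟨h3, ⟨⟨h5, ⟨two_ne_zero, h4⟩, I_ne_zero⟩, one_ne_zero⟩, Complex.exp_ne_zero _⟩

/-- The weighted kernels as elements of `L²`. -/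
def kerLp (s : ℝ) (z : {z : ℂ // |z.im| = 1}) : Lp ℂ 2 (volume : Measure ℝ) :=
  (memLp_wCauchy s z.1 z.2).toLp _

open scoped FourierTransform in
lemma ae_zero_of_orth (s : ℝ) (g : Lp ℂ 2 (volume : Measure ℝ))
    (hg : ∀ z, inner ℂ (kerLp s z) g = 0) (z : ℂ) (hz : |z.im| = 1) :
    ∀ᵐ t : ℝ, inner ℂ (wCauchy s z t) (g t) = 0 := by
  have hi : Integrable (fun t : ℝ => inner ℂ (wCauchy s z t) (g t)) := by
    refine (L2.integrable_inner (𝕜 := ℂ) (kerLp s ⟨z, hz⟩) g).congr ?_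
    filter_upwards [(memLp_wCauchy s z hz).coeFn_toLp] with t ht
    simp only [kerLp]
    rw [ht]
  refine ae_zero_of_fourier _ hi (fun x => ?_)
  rw [Real.fourier_real_eq_integral_exp_smul]
  have hz' : |(((2 * Real.pi * x : ℝ) : ℂ) + z).im| = 1 := by
    simpa only [add_im, ofReal_im, zero_add] using hz
  rw [← hg ⟨_, hz'⟩, L2.inner_def]
  refine integral_congr_ae ?_
  filter_upwards [(memLp_wCauchy s _ hz').coeFn_toLp] with t ht
  simp only [kerLp]
  rw [ht, wCauchy_shift]
  simp only [RCLike.inner_apply, smul_eq_mul, map_mul, ← Complex.exp_conj, conj_I, conj_ofReal]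
  have : ((-2 * Real.pi * t * x : ℝ) : ℂ) * I = -I * t * ((2 * Real.pi * x : ℝ) : ℂ) := by
    push_cast; ring
  rw [this]
  ring

lemma span_dense (s : ℝ) :
    (Submodule.span ℂ (Set.range (kerLp s))).topologicalClosure = ⊤ := by
  rw [Submodule.topologicalClosure_eq_top_iff, Submodule.eq_bot_iff]
  intro g hg
  have hg' : ∀ z, inner ℂ (kerLp s z) g = 0 := fun z =>
    (Submodule.mem_orthogonal _ g).1 hg _ (Submodule.subset_span ⟨z, rfl⟩)
  rw [Lp.eq_zero_iff_ae_eq_zero]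
  have h0 : ∀ᵐ t : ℝ, t ≠ 0 := by simp [ae_iff]
  filter_upwards [h0, ae_zero_of_orth s g hg' I (by simp),
    ae_zero_of_orth s g hg' (-I) (by simp)] with t ht h1 h2
  simp only [RCLike.inner_apply, mul_eq_zero, map_eq_zero] at h1 h2
  rcases lt_or_gt_of_ne ht with h | h
  · exact h2.resolve_right (wCauchy_ne_zero s _ t (by simpa using h))
  · exact h1.resolve_right (wCauchy_ne_zero s _ t (by simpa using h))

/-- **Density of the Cauchy kernels in the Sobolev spaces `H_s`** (Lemma 9.5): for every
real `s`, the linear span of the functions `φ_z(x) = 1/(z-x)`, `z ∈ ℂ∖ℝ`, is dense in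
`H_s`. The space `H_s` is described on the Fourier side (via the isometry
`φ ↦ φ̂`, `‖φ‖_{H_s}² = ∫ (1+2|k|)^{2s} |φ̂(k)|² dk`) : any `ψ = φ̂` of finite weighted
L² norm is approximated arbitrarily well by finite linear combinations of the Fourier
transforms `φ̂_{z_i} = cauchyFT z_i` of Cauchy kernels. -/
theorem density_of_cauchy_kernels_in_Hs (s : ℝ) (ψ : ℝ → ℂ) (hψ : Measurable ψ)
    (hψHs : Integrable (fun k : ℝ => (1 + 2 * |k|) ^ (2 * s) * ‖ψ k‖ ^ 2)) :
    ∀ δ > 0, ∃ (m : ℕ) (zs : Fin m → ℂ) (a : Fin m → ℂ),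
      (∀ i, (zs i).im ≠ 0) ∧
      (∫ k : ℝ, (1 + 2 * |k|) ^ (2 * s) * ‖ψ k - ∑ i, a i * cauchyFT (zs i) k‖ ^ 2) < δ := by
  intro δ hδ
  have hum : Measurable (fun k : ℝ => (((1 + 2 * |k|) ^ s : ℝ) : ℂ) * ψ k) := by fun_prop
  have hu : MemLp (fun k : ℝ => (((1 + 2 * |k|) ^ s : ℝ) : ℂ) * ψ k) 2 := by
    rw [memLp_two_iff_integrable_sq_norm hum.aestronglyMeasurable]
    simpa only [norm_sq_weight] using hψHs
  have hcl : hu.toLp _ ∈ closure (Submodule.span ℂ (Set.range (kerLp s)) : Set (Lp ℂ 2 volume)) := by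
    rw [← Submodule.topologicalClosure_coe, span_dense]
    trivial
  obtain ⟨y, hy, hd⟩ := Metric.mem_closure_iff.1 hcl (Real.sqrt δ) (Real.sqrt_pos.2 hδ)
  obtain ⟨m, a, w, rfl⟩ := Submodule.mem_span_set'.1 hy
  choose zs hzs using fun i => (w i).2
  refine ⟨m, fun i => (zs i).1, a, fun i h => ?_, ?_⟩
  · have := (zs i).2
    simp [h] at this
  have hS : ∀ᵐ k : ℝ, (∑ i, a i • (w i : Lp ℂ 2 (volume : Measure ℝ)) : Lp ℂ 2 (volume : Measure ℝ)) k
      = ∑ i, a i * wCauchy s (zs i).1 k := by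
    have h1 : ∀ᵐ k : ℝ, ∀ i, (a i • (w i : Lp ℂ 2 (volume : Measure ℝ))) k
        = a i * wCauchy s (zs i).1 k := by
      rw [ae_all_iff]
      intro i
      rw [← hzs i]
      filter_upwards [Lp.coeFn_smul (a i) (kerLp s (zs i)),
        (memLp_wCauchy s (zs i).1 (zs i).2).coeFn_toLp] with k h1 h2
      rw [h1, Pi.smul_apply, smul_eq_mul, kerLp, h2]
    filter_upwards [h1, Lp.coeFn_finsetSum Finset.univ
      (fun i => a i • (w i : Lp ℂ 2 (volume : Measure ℝ)))] with k h1 h2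
    rw [h2, Finset.sum_apply]
    exact Finset.sum_congr rfl fun i _ => h1 i
  rw [dist_eq_norm] at hd
  set S := (∑ i, a i • (w i : Lp ℂ 2 (volume : Measure ℝ)) : Lp ℂ 2 (volume : Measure ℝ))
  have hn : ‖hu.toLp _ - S‖ ^ 2 < δ := by
    rwa [Real.lt_sqrt (norm_nonneg _)] at hd
  have key : ((∫ k : ℝ, (1 + 2 * |k|) ^ (2 * s) *
      ‖ψ k - ∑ i, a i * cauchyFT (zs i).1 k‖ ^ 2 : ℝ) : ℂ) = ((‖hu.toLp _ - S‖ ^ 2 : ℝ) : ℂ) := by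
    have h3 := inner_self_eq_norm_sq_to_K (𝕜 := ℂ) (hu.toLp _ - S)
    rw [L2.inner_def] at h3
    push_cast
    refine Eq.trans ?_ h3
    rw [← integral_complex_ofReal]
    refine integral_congr_ae ?_
    filter_upwards [hS, Lp.coeFn_sub (hu.toLp _) S, hu.coeFn_toLp] with k h1 h2 h4
    rw [inner_self_eq_norm_sq_to_K, h2, Pi.sub_apply, h4, h1, ← norm_sq_weight]
    simp only [wCauchy, mul_sub, Finset.mul_sum, mul_left_comm]
    norm_cast
  have key' := Complex.ofReal_injective key
  rw [key']
  exact hn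

end
end
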